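/- Let p, q ∈ R be idempotents. Then p*(1-q) is group invertible if and only if p - q1 is group invertible and (p-q1)^π * q2 = 0. -/

import Mathlib

/-!
Put `a = p * (1 - q)`, `x = p - q1` and `b = q2`. Then `x = a * p` and `a = x - b`, with
`p * a = a`, `p * b = b` and `b * p = 0`: relative to `p`, the element `a` is the upper triangular
matrix with rows `(x, -b)` and `(0, 0)`.

If `d` is a group inverse of `a`, then `p * d = d`, and `d * p` is a group inverse of `x`. Moreover
`a = a * a * d = x * a * d` lies in `x * R`, so `x^π` kills `a`, hence also `b = x - a`.
Conversely, if `c` is the group inverse of `x` and `x * c * b = b`, then `c - c * c * b` is a group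
inverse of `x - b`.
-/

variable {R : Type*} [Ring R]

/-- `c` is a group inverse of `a`. -/
def IsGroupInvOf (a c : R) : Prop := a * c * a = a ∧ c * a * c = c ∧ a * c = c * a

/-- `a` is group invertible. -/
def GroupInvertible (a : R) : Prop := ∃ c, IsGroupInvOf a c

/-- The group inverse `a^#` (junk value `0` if it does not exist). -/
noncomputable def gi (a : R) : R :=
  haveI := Classical.dec (GroupInvertible a)
  if h : GroupInvertible a then h.choose else 0

/-- The spectral idempotent `a^π = 1 - a * a^#`. -/
noncomputable def sp (a : R) : R := 1 - a * gi a

theorem isGroupInvOf_gi {a : R} (h : GroupInvertible a) : IsGroupInvOf a (gi a) := by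
  unfold gi
  rw [dif_pos h]
  exact h.choose_spec

/-- A group inverse of `a` is fixed by every left unit of `a`. -/
theorem IsGroupInvOf.left_unit {a d p : R} (h : IsGroupInvOf a d) (hpa : p * a = a) :
    p * d = d := by
  obtain ⟨-, h2, h3⟩ := h
  have e : d = a * d * d := by rw [h3, h2]
  rw [e, ← mul_assoc, ← mul_assoc, hpa]

theorem IsGroupInvOf.mul_corner {a d p : R} (h : IsGroupInvOf a d) (hpa : p * a = a) :
    IsGroupInvOf (a * p) (d * p) := by
  have hpd := h.left_unit hpa
  obtain ⟨h1, h2, h3⟩ := h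
  have e1 : a * p * (d * p) = a * d * p := by
    rw [mul_assoc a p, ← mul_assoc p d p, hpd, mul_assoc]
  have e2 : d * p * (a * p) = d * a * p := by
    rw [mul_assoc d p, ← mul_assoc p a p, hpa, mul_assoc]
  refine ⟨?_, ?_, ?_⟩
  · rw [e1, mul_assoc (a * d), ← mul_assoc p a p, hpa, ← mul_assoc, h1]
  · rw [e2, mul_assoc (d * a), ← mul_assoc p d p, hpd, ← mul_assoc, h2]
  · rw [e1, e2, h3]

/-- Group inverse of the upper triangular element with rows `(x, -b)` and `(0, 0)`. -/
theorem IsGroupInvOf.sub_of_triangular {x c b p : R} (h : IsGroupInvOf x c) (hpx : p * x = x)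
    (hpb : p * b = b) (hbp : b * p = 0) (hb : x * c * b = b) :
    IsGroupInvOf (x - b) (c - c * c * b) := by
  have hpc := h.left_unit hpx
  obtain ⟨h1, h2, h3⟩ := h
  have hbc : b * c = 0 := by rw [← hpc, ← mul_assoc, hbp, zero_mul]
  have hbx : b * x = 0 := by rw [← hpx, ← mul_assoc, hbp, zero_mul]
  have hbb : b * b = 0 := by
    calc b * b = b * p * b := by rw [mul_assoc, hpb]
      _ = 0 := by rw [hbp, zero_mul]
  have hxcc : x * c * c = c := by rw [h3, h2]
  have e1 : (x - b) * (c - c * c * b) = x * c - c * b := by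
    calc _ = x * c - x * c * c * b - b * c + b * c * c * b := by noncomm_ring
      _ = _ := by rw [hbc, hxcc]; simp
  have e2 : (c - c * c * b) * (x - b) = x * c - c * b := by
    calc _ = c * x - c * b - c * c * (b * x) + c * c * (b * b) := by noncomm_ring
      _ = _ := by rw [hbx, hbb, h3]; simp
  refine ⟨?_, ?_, by rw [e1, e2]⟩
  · rw [e1]
    calc _ = x * c * x - x * c * b - c * (b * x) + c * (b * b) := by noncomm_ring
      _ = _ := by rw [hbx, hbb, h1, hb]; simp
  · rw [e2]
    calc _ = x * c * c - x * c * c * c * b - c * (b * c) + c * (b * c) * c * b := by noncomm_ring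
      _ = _ := by rw [hbc, hxcc]; simp

theorem group_inv_p_qbar (p q q1 q2 q3 q4 : R) (hp : p * p = p) (hq : q * q = q)
    (h1 : q1 = p * q * p) (h2 : q2 = p * q * (1 - p))
    (h3 : q3 = (1 - p) * q * p) (h4 : q4 = (1 - p) * q * (1 - p)) :
    GroupInvertible (p * (1 - q)) ↔ GroupInvertible (p - q1) ∧ sp (p - q1) * q2 = 0 := by
  have hx : p - q1 = p * (1 - q) * p := by
    rw [h1, mul_sub, mul_one, sub_mul, hp]
  have hpa : p * (p * (1 - q)) = p * (1 - q) := by rw [← mul_assoc, hp]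
  have ha : p * (1 - q) = (p - q1) - q2 := by
    rw [h1, h2]; noncomm_ring
  have hpx : p * (p - q1) = p - q1 := by rw [hx, ← mul_assoc, hpa]
  have hpb : p * q2 = q2 := by rw [h2, ← mul_assoc, ← mul_assoc, hp]
  have hbp : q2 * p = 0 := by rw [h2, mul_assoc, sub_mul, one_mul, hp, sub_self, mul_zero]
  constructor
  · rintro ⟨d, hd⟩
    have hX : GroupInvertible (p - q1) := ⟨d * p, hx ▸ hd.mul_corner hpa⟩
    refine ⟨hX, ?_⟩
    have hc := (isGroupInvOf_gi hX).1
    obtain ⟨hd1, -, hd3⟩ := hd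
    have hb : q2 = (p - q1) - p * (1 - q) := by rw [ha]; abel
    have hxa : p * (1 - q) = (p - q1) * (p * (1 - q) * d) := by
      calc p * (1 - q) = p * (1 - q) * (p * (1 - q) * d) := by
            rw [hd3, ← mul_assoc, hd1]
        _ = p * (1 - q) * (p * (p * (1 - q)) * d) := by rw [hpa]
        _ = (p - q1) * (p * (1 - q) * d) := by rw [hx]; simp only [mul_assoc]
    have hk : (p - q1) * gi (p - q1) * (p * (1 - q)) = p * (1 - q) := by
      rw [hxa, ← mul_assoc, hc]
    rw [sp, hb, sub_mul, one_mul, mul_sub (_ * _), hc, hk, sub_self]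
  · rintro ⟨hX, hs⟩
    rw [sp, sub_mul, one_mul, sub_eq_zero] at hs
    rw [ha]
    exact ⟨_, (isGroupInvOf_gi hX).sub_of_triangular hpx hpb hbp hs.symm⟩
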